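/- arXiv:2112.10181 — 7 statements merged into one kernel-verified Lean document; each statement's English description precedes it below -/
import Mathlib

section
/- Let $X$ be a real vector space, $D \subseteq X$ a convex set, and $f_1, \dots, f_n : D \to \mathbb{R}$ convex functions such that $0 \le \max(f_1(x), \dots, f_n(x))$ for all $x \in D$. Then there exist $\lambda_1, \dots, \lambda_n \ge 0$ with $\lambda_1 + \cdots + \lambda_n = 1$ such that $0 \le \lambda_1 f_1(x) + \cdots + \lambda_n f_n(x)$ for all $x \in D$. -/
/-!
The values of the convex map `F = (f₁, …, fₙ)`, together with everything above them, form a convex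
subset of `ℝⁿ`. Nonnegativity of the maximum says that this set misses the open negative orthant, so
a hyperplane separates the two. A functional bounded above on the negative orthant is nonnegative on
the nonnegative orthant, so its coefficients, once normalized, are the multipliers.
-/

section LinearFunctional

variable {𝕜 ι : Type*} [Field 𝕜] [LinearOrder 𝕜] [IsStrictOrderedRing 𝕜]

theorem nonpos_and_nonneg_of_forall_pos_mul_lt {a u : 𝕜} (h : ∀ t, 0 < t → t * a < u) :
    a ≤ 0 ∧ 0 ≤ u := by
  have hau : a < u := by simpa only [one_mul] using h 1 one_pos
  constructor
  · by_contra! ha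
    simpa only [div_mul_cancel₀ u ha.ne', lt_irrefl] using h (u / a) (div_pos (ha.trans hau) ha)
  · by_contra! hu
    have ha : a < 0 := hau.trans hu
    simpa only [div_mul_cancel₀ u ha.ne, lt_irrefl] using h (u / a) (div_pos_of_neg_of_neg hu ha)

variable {g : (ι → 𝕜) →ₗ[𝕜] 𝕜}

theorem bound_nonneg_of_forall_neg_map_lt {u : 𝕜} (hg : ∀ y, (∀ i, y i < 0) → g y < u) :
    0 ≤ u := by
  refine (nonpos_and_nonneg_of_forall_pos_mul_lt (a := g (-1)) fun t ht ↦ ?_).2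
  simpa only [map_smul, smul_eq_mul] using hg (t • (-1)) fun i ↦ by simpa using ht

theorem map_nonneg_of_forall_neg_map_lt {u : 𝕜} (hg : ∀ y, (∀ i, y i < 0) → g y < u)
    {z : ι → 𝕜} (hz : 0 ≤ z) : 0 ≤ g z := by
  have hray : ∀ t, 0 < t → t * -g z < u + g 1 := fun t ht ↦ by
    have hneg : ∀ i, (-(t • z) - 1) i < 0 := fun i ↦ by
      have := mul_nonneg ht.le (hz i)
      simp only [Pi.sub_apply, Pi.neg_apply, Pi.smul_apply, Pi.one_apply, smul_eq_mul]
      linarith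
    have := hg _ hneg
    rw [map_sub, map_neg, map_smul, smul_eq_mul] at this
    linarith
  exact neg_nonpos.1 (nonpos_and_nonneg_of_forall_pos_mul_lt hray).1

theorem exists_stdSimplex_map_eq_mul_sum [Fintype ι] (hg : ∀ z, 0 ≤ z → 0 ≤ g z) (hg0 : g ≠ 0) :
    ∃ c > 0, ∃ w ∈ stdSimplex 𝕜 ι, ∀ y, g y = c * ∑ i, w i * y i := by
  classical
  let v : ι → 𝕜 := fun i ↦ g (Pi.single i 1)
  have hv : ∀ i, 0 ≤ v i := fun i ↦ hg _ (Pi.single_nonneg.2 zero_le_one)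
  have hgv : ∀ y, g y = ∑ i, v i * y i := fun y ↦ by
    conv_lhs => rw [pi_eq_sum_univ' y]
    simp only [map_sum, map_smul, smul_eq_mul, v, mul_comm]
  have hsum : 0 < ∑ i, v i := by
    refine (Finset.sum_nonneg fun i _ ↦ hv i).lt_of_ne' fun h ↦ hg0 ?_
    have hv0 := (Fintype.sum_eq_zero_iff_of_nonneg hv).1 h
    ext i
    exact congrFun hv0 i
  refine ⟨∑ i, v i, hsum, fun i ↦ v i / ∑ j, v j, ⟨fun i ↦ div_nonneg (hv i) hsum.le, ?_⟩,
    fun y ↦ ?_⟩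
  · rw [← Finset.sum_div, div_self hsum.ne']
  · simp only [hgv, Finset.mul_sum, ← mul_assoc, mul_div_cancel₀ _ hsum.ne']

end LinearFunctional

theorem exists_stdSimplex_forall_sum_nonneg {ι : Type*} [Fintype ι] [Nonempty ι]
    {s : Set (ι → ℝ)} (hs : Convex ℝ s) (hmax : ∀ y ∈ s, ∃ i, 0 ≤ y i) :
    ∃ w ∈ stdSimplex ℝ ι, ∀ y ∈ s, 0 ≤ ∑ i, w i * y i := by
  classical
  obtain rfl | ⟨y₀, hy₀⟩ := s.eq_empty_or_nonempty
  · exact ⟨_, single_mem_stdSimplex ℝ (Classical.arbitrary ι), fun _ h ↦ h.elim⟩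
  let N : Set (ι → ℝ) := Set.univ.pi fun _ ↦ Set.Iio 0
  have hN : Convex ℝ N := convex_pi fun _ _ ↦ convex_Iio 0
  have hN_open : IsOpen N := isOpen_set_pi Set.finite_univ fun _ _ ↦ isOpen_Iio
  have hNs : Disjoint N s := Set.disjoint_left.2 fun y hyN hys ↦
    let ⟨i, hi⟩ := hmax y hys
    (hyN i trivial).not_ge hi
  obtain ⟨g, u, hgN, hgs⟩ := geometric_hahn_banach_open hN hN_open hs hNs
  have hg_lt : ∀ y, (∀ i, y i < 0) → (g : (ι → ℝ) →ₗ[ℝ] ℝ) y < u := fun y hy ↦ hgN y fun i _ ↦ hy i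
  have hu : 0 ≤ u := bound_nonneg_of_forall_neg_map_lt hg_lt
  have hg0 : (g : (ι → ℝ) →ₗ[ℝ] ℝ) ≠ 0 := fun h ↦ by
    have hlt : g (-1) < g y₀ := (hg_lt (-1) fun _ ↦ neg_one_lt_zero).trans_le (hgs y₀ hy₀)
    have hzero : ∀ y, g y = 0 := LinearMap.congr_fun h
    exact hlt.ne ((hzero _).trans (hzero _).symm)
  obtain ⟨c, hc, w, hw, hgw⟩ :=
    exists_stdSimplex_map_eq_mul_sum (fun z ↦ map_nonneg_of_forall_neg_map_lt hg_lt) hg0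
  exact ⟨w, hw, fun y hy ↦ nonneg_of_mul_nonneg_right ((hu.trans (hgs y hy)).trans_eq (hgw y)) hc⟩

section ConvexOn

variable {𝕜 E : Type*} [Semiring 𝕜] [PartialOrder 𝕜] [AddCommMonoid E] [SMul 𝕜 E] {D : Set E}

theorem convexOn_pi {ι : Type*} [Nonempty ι] {β : ι → Type*} [∀ i, AddCommMonoid (β i)]
    [∀ i, PartialOrder (β i)] [∀ i, SMul 𝕜 (β i)] {F : E → ∀ i, β i} :
    ConvexOn 𝕜 D F ↔ ∀ i, ConvexOn 𝕜 D fun x ↦ F x i :=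
  ⟨fun h i ↦ ⟨h.1, fun _ hx _ hy _ _ ha hb hab ↦ h.2 hx hy ha hb hab i⟩,
    fun h ↦ ⟨(h (Classical.arbitrary ι)).1, fun _ hx _ hy _ _ ha hb hab i ↦
      (h i).2 hx hy ha hb hab⟩⟩

theorem convex_upperClosure_image_of_convexOn {β : Type*} [AddCommMonoid β] [PartialOrder β]
    [IsOrderedAddMonoid β] [SMul 𝕜 β] [PosSMulMono 𝕜 β] {F : E → β} (hF : ConvexOn 𝕜 D F) :
    Convex 𝕜 (upperClosure (F '' D) : Set β) := by
  rintro y ⟨_, ⟨x, hx, rfl⟩, hxy⟩ y' ⟨_, ⟨x', hx', rfl⟩, hxy'⟩ a b ha hb hab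
  refine ⟨_, Set.mem_image_of_mem F (hF.1 hx hx' ha hb hab), ?_⟩
  calc F (a • x + b • x') ≤ a • F x + b • F x' := hF.2 hx hx' ha hb hab
    _ ≤ a • y + b • y' :=
      add_le_add (smul_le_smul_of_nonneg_left hxy ha) (smul_le_smul_of_nonneg_left hxy' hb)

end ConvexOn

theorem maximum_theorem_convex_general {X ι : Type*} [AddCommMonoid X] [SMul ℝ X] [Fintype ι]
    [Nonempty ι] {D : Set X} {f : ι → X → ℝ} (hf : ∀ i, ConvexOn ℝ D (f i))
    (hmax : ∀ x ∈ D, ∃ i, 0 ≤ f i x) :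
    ∃ w ∈ stdSimplex ℝ ι, ∀ x ∈ D, 0 ≤ ∑ i, w i * f i x := by
  let F : X → ι → ℝ := fun x i ↦ f i x
  have hF : Convex ℝ (upperClosure (F '' D) : Set (ι → ℝ)) :=
    convex_upperClosure_image_of_convexOn (convexOn_pi.2 hf)
  have hF_max : ∀ y ∈ upperClosure (F '' D), ∃ i, 0 ≤ y i := by
    rintro y ⟨_, ⟨x, hx, rfl⟩, hxy⟩
    exact (hmax x hx).imp fun i hi ↦ hi.trans (hxy i)
  obtain ⟨w, hw, hw_nonneg⟩ := exists_stdSimplex_forall_sum_nonneg hF hF_max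
  exact ⟨w, hw, fun x hx ↦ hw_nonneg (F x) (subset_upperClosure (Set.mem_image_of_mem F hx))⟩

/-- Maximum Theorem of Dubovitskii and Milyutin for convex functions. -/
theorem maximum_theorem_convex
    {X : Type*} [AddCommGroup X] [Module ℝ X]
    {D : Set X} (hD : Convex ℝ D)
    {n : ℕ} (hn : 0 < n) (f : Fin n → X → ℝ)
    (hconv : ∀ i, ConvexOn ℝ D (f i))
    (hmax : ∀ x ∈ D, 0 ≤ Finset.univ.sup' ⟨⟨0, hn⟩, Finset.mem_univ _⟩ fun i => f i x) :
    ∃ lam : Fin n → ℝ, (∀ i, 0 ≤ lam i) ∧ (∑ i, lam i = 1) ∧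
      ∀ x ∈ D, 0 ≤ ∑ i, lam i * f i x := by
  have : Nonempty (Fin n) := ⟨⟨0, hn⟩⟩
  obtain ⟨w, ⟨hw, hw_sum⟩, hwf⟩ := maximum_theorem_convex_general hconv fun x hx ↦
    let ⟨i, _, hi⟩ := (Finset.le_sup'_iff _).1 (hmax x hx)
    ⟨i, hi⟩
  exact ⟨w, hw, hw_sum, hwf⟩
end

section
/- Let $(X, +)$ be an Abelian (commutative) semigroup and let $f_1, \dots, f_n : X \to \mathbb{R}$ be subadditive functions such that $0 \le \max(f_1(x), \dots, f_n(x))$ for all $x \in X$. Then there exist $\lambda_1, \dots, \lambda_n \ge 0$ with $\lambda_1 + \cdots + \lambda_n = 1$ such that $0 \le \lambda_1 f_1(x) + \cdots + \lambda_n f_n(x)$ for all $x \in X$. -/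
/-!
By subadditivity, any nonempty finite sum of vectors `(f₁ x, …, fₙ x)` dominates another such
vector, so the additive monoid `S` which they generate misses the open negative orthant `N`. As
`N` is a cone, it also misses all vectors with a positive integer multiple in `S`, and, being
open, their closure. This closure is stable under rational, hence real, nonnegative scaling, so it
is a convex cone, and a functional separating it from `N` has, up to normalization, the required
coefficients.
-/

/-- The submonoid of the elements having a positive multiple in `S`. In a real topological
vector space it is the set of nonnegative rational multiples of elements of `S`, and its closure
is the closed convex cone generated by `S`. -/
def rootClosure {M : Type*} [AddCommMonoid M] (S : AddSubmonoid M) : AddSubmonoid M where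
  carrier := {v | ∃ m : ℕ, 0 < m ∧ m • v ∈ S}
  zero_mem' := ⟨1, one_pos, by simp⟩
  add_mem' := by
    rintro v w ⟨m, hm, hv⟩ ⟨k, hk, hw⟩
    refine ⟨m * k, Nat.mul_pos hm hk, ?_⟩
    rw [nsmul_add, mul_nsmul, mul_nsmul']
    exact S.add_mem (S.nsmul_mem hv k) (S.nsmul_mem hw m)

section RootClosure

theorem le_rootClosure {M : Type*} [AddCommMonoid M] (S : AddSubmonoid M) : S ≤ rootClosure S :=
  fun v hv => ⟨1, one_pos, by rwa [one_nsmul]⟩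

theorem natCast_div_smul_mem_rootClosure {𝕜 M : Type*} [Semifield 𝕜] [CharZero 𝕜]
    [AddCommMonoid M] [Module 𝕜 M] {S : AddSubmonoid M} {v : M} (hv : v ∈ rootClosure S)
    (p : ℕ) {q : ℕ} (hq : 0 < q) : ((p : 𝕜) / q) • v ∈ rootClosure S := by
  obtain ⟨m, hm, hmv⟩ := hv
  have hclear : q • ((p : 𝕜) / q) • v = p • v := by
    rw [← Nat.cast_smul_eq_nsmul 𝕜 q, ← Nat.cast_smul_eq_nsmul 𝕜 p, smul_smul,
      mul_div_cancel₀ _ (Nat.cast_ne_zero.2 hq.ne')]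
  refine ⟨q * m, Nat.mul_pos hq hm, ?_⟩
  rw [mul_nsmul, hclear, nsmul_left_comm]
  exact S.nsmul_mem hmv p

variable {E : Type*} [AddCommGroup E] [Module ℝ E] [TopologicalSpace E] [ContinuousSMul ℝ E]

theorem smul_mem_closure_rootClosure {S : AddSubmonoid E} {a : ℝ} (ha : 0 ≤ a) {v : E}
    (hv : v ∈ closure (rootClosure S : Set E)) : a • v ∈ closure (rootClosure S : Set E) := by
  refine closure_closure.subset (map_mem_closure (continuous_const_smul a) hv fun w hw => ?_)
  have hlim : Filter.Tendsto (fun k : ℕ => ((⌊a * k⌋₊ : ℝ) / k) • w) Filter.atTop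
      (nhds (a • w)) :=
    ((tendsto_nat_floor_mul_div_atTop ha).comp tendsto_natCast_atTop_atTop).smul_const w
  refine mem_closure_of_tendsto hlim ?_
  filter_upwards [Filter.eventually_gt_atTop 0] with k hk
  exact natCast_div_smul_mem_rootClosure hw _ hk

theorem convex_closure_rootClosure [ContinuousAdd E] (S : AddSubmonoid E) :
    Convex ℝ (closure (rootClosure S : Set E)) :=
  fun _ hv _ hw _ _ ha hb _ => (rootClosure S).topologicalClosure.add_mem
    (smul_mem_closure_rootClosure ha hv) (smul_mem_closure_rootClosure hb hw)

end RootClosure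

theorem nonneg_of_forall_le_nsmul {G : Type*} [AddCommGroup G] [LinearOrder G]
    [IsOrderedAddMonoid G] [Archimedean G] {b c : G} (h : ∀ m : ℕ, b ≤ m • c) : 0 ≤ c := by
  by_contra! hc
  obtain ⟨m, hm⟩ := exists_lt_nsmul (neg_pos.2 hc) (-b)
  rw [smul_neg, neg_lt_neg_iff] at hm
  exact hm.not_ge (h m)

theorem exists_forall_neg_forall_nonneg_of_disjoint_rootClosure {E : Type*} [AddCommGroup E]
    [Module ℝ E] [TopologicalSpace E] [IsTopologicalAddGroup E] [ContinuousSMul ℝ E]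
    {N : Set E} (hopen : IsOpen N) (hconv : Convex ℝ N) {S : AddSubmonoid E}
    (hdisj : Disjoint N (rootClosure S)) :
    ∃ g : StrongDual ℝ E, (∀ v ∈ N, g v < 0) ∧ ∀ v ∈ S, 0 ≤ g v := by
  obtain ⟨g, u, hN, hS⟩ := geometric_hahn_banach_open hconv hopen (convex_closure_rootClosure S)
    (hdisj.closure_right hopen)
  have hbdd : ∀ v ∈ S, u ≤ g v := fun v hv => hS v (subset_closure (le_rootClosure S hv))
  have hu : u ≤ 0 := g.map_zero ▸ hbdd 0 S.zero_mem
  refine ⟨g, fun v hv => (hN v hv).trans_le hu, fun v hv =>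
    nonneg_of_forall_le_nsmul (b := u) fun m => ?_⟩
  rw [← map_nsmul]
  exact hbdd _ (S.nsmul_mem hv m)

theorem map_nonneg_of_forall_map_neg {ι : Type*} {g : StrongDual ℝ (ι → ℝ)}
    (hg : ∀ v : ι → ℝ, (∀ i, v i < 0) → g v < 0) {v : ι → ℝ} (hv : 0 ≤ v) : 0 ≤ g v := by
  have hclosure : closure (Set.univ.pi fun _ : ι => Set.Iio (0 : ℝ)) ⊆ {w | g w ≤ 0} :=
    closure_minimal (fun w hw => (hg w fun i => hw i trivial).le)
      (isClosed_le g.continuous continuous_const)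
  simp only [closure_pi_set, closure_Iio] at hclosure
  have hneg : g (-v) ≤ 0 := hclosure fun i _ => neg_nonpos.2 (hv i)
  rwa [map_neg, neg_nonpos] at hneg

theorem exists_mem_stdSimplex_sum_mul_eq_div {𝕜 ι : Type*} [Field 𝕜] [LinearOrder 𝕜]
    [IsStrictOrderedRing 𝕜] [Fintype ι] (g : (ι → 𝕜) →ₗ[𝕜] 𝕜) (hg : ∀ v, 0 ≤ v → 0 ≤ g v)
    (hone : 0 < g 1) : ∃ w ∈ stdSimplex 𝕜 ι, ∀ v, ∑ i, w i * v i = g v / g 1 := by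
  classical
  have hcoord (v : ι → 𝕜) : ∑ i, g (Pi.single i 1) / g 1 * v i = g v / g 1 := by
    conv_rhs => rw [pi_eq_sum_univ' v, map_sum, Finset.sum_div]
    refine Finset.sum_congr rfl fun i _ => ?_
    rw [map_smul, smul_eq_mul, div_mul_eq_mul_div, mul_comm]
  refine ⟨fun i => g (Pi.single i 1) / g 1, ⟨fun i => ?_, ?_⟩, hcoord⟩
  · exact div_nonneg (hg _ (Pi.single_nonneg.2 zero_le_one)) hone.le
  · simpa [hone.ne'] using hcoord 1

theorem disjoint_negative_orthant_rootClosure {ι M : Type*} [AddCommMonoid M] [LinearOrder M]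
    [IsOrderedAddMonoid M] {S : AddSubmonoid (ι → M)} (hS : ∀ v ∈ S, ∃ i, 0 ≤ v i) :
    Disjoint (Set.univ.pi fun _ : ι => Set.Iio (0 : M)) (rootClosure S) := by
  rw [Set.disjoint_left]
  rintro v hv ⟨m, hm, hmv⟩
  obtain ⟨i, hi⟩ := hS _ hmv
  exact hi.not_gt (nsmul_neg (hv i trivial) hm.ne')

theorem exists_mem_stdSimplex_forall_nonneg {ι : Type*} [Fintype ι]
    {S : AddSubmonoid (ι → ℝ)} (hS : ∀ v ∈ S, ∃ i, 0 ≤ v i) :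
    ∃ w ∈ stdSimplex ℝ ι, ∀ v ∈ S, 0 ≤ ∑ i, w i * v i := by
  obtain ⟨g, hneg, hnonneg⟩ := exists_forall_neg_forall_nonneg_of_disjoint_rootClosure
    (isOpen_set_pi Set.finite_univ fun _ _ => isOpen_Iio)
    (convex_pi fun _ _ => convex_Iio 0) (disjoint_negative_orthant_rootClosure hS)
  have hg (v : ι → ℝ) (hv : ∀ i, v i < 0) : g v < 0 := hneg v fun i _ => hv i
  have hone : 0 < g 1 := by
    have : g (-1) < 0 := hg _ fun _ => neg_one_lt_zero
    rwa [map_neg, neg_lt_zero] at this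
  obtain ⟨w, hw, hgw⟩ := exists_mem_stdSimplex_sum_mul_eq_div (g : (ι → ℝ) →ₗ[ℝ] ℝ)
    (fun v hv => map_nonneg_of_forall_map_neg hg hv) hone
  exact ⟨w, hw, fun v hv => (hgw v).symm ▸ div_nonneg (hnonneg v hv) hone.le⟩

theorem eq_zero_or_exists_le_of_mem_closure_range {X M : Type*} [Add X] [AddCommMonoid M]
    [Preorder M] [IsOrderedAddMonoid M] {F : X → M} (hF : ∀ x y, F (x + y) ≤ F x + F y) {v : M}
    (hv : v ∈ AddSubmonoid.closure (Set.range F)) : v = 0 ∨ ∃ x, F x ≤ v := by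
  induction hv using AddSubmonoid.closure_induction with
  | mem v hv =>
    obtain ⟨x, rfl⟩ := hv
    exact .inr ⟨x, le_rfl⟩
  | zero => exact .inl rfl
  | add v w _ _ ihv ihw =>
    rcases ihv with rfl | ⟨x, hx⟩
    · rwa [zero_add]
    rcases ihw with rfl | ⟨y, hy⟩
    · exact .inr ⟨x, by rwa [add_zero]⟩
    · exact .inr ⟨x + y, (hF x y).trans (add_le_add hx hy)⟩

theorem maximum_theorem_subadditive_general {X ι : Type*} [Add X] [Fintype ι] [Nonempty ι]
    (f : ι → X → ℝ) (hsub : ∀ i x y, f i (x + y) ≤ f i x + f i y)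
    (hmax : ∀ x, ∃ i, 0 ≤ f i x) :
    ∃ w ∈ stdSimplex ℝ ι, ∀ x, 0 ≤ ∑ i, w i * f i x := by
  let F : X → ι → ℝ := fun x i => f i x
  have hF (x y : X) : F (x + y) ≤ F x + F y := fun i => hsub i x y
  have hclosure : ∀ v ∈ AddSubmonoid.closure (Set.range F), ∃ i, 0 ≤ v i := by
    intro v hv
    obtain rfl | ⟨x, hx⟩ := eq_zero_or_exists_le_of_mem_closure_range hF hv
    · exact ⟨Classical.arbitrary ι, le_rfl⟩
    · exact (hmax x).imp fun i hi => hi.trans (hx i)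
  obtain ⟨w, hw, hnonneg⟩ := exists_mem_stdSimplex_forall_nonneg hclosure
  exact ⟨w, hw, fun x => hnonneg _ (AddSubmonoid.subset_closure ⟨x, rfl⟩)⟩

/-- Maximum Theorem for subadditive functions on an Abelian semigroup. -/
theorem maximum_theorem_subadditive
    {X : Type*} [AddCommSemigroup X]
    {n : ℕ} (hn : 0 < n) (f : Fin n → X → ℝ)
    (hsub : ∀ i, ∀ x y : X, f i (x + y) ≤ f i x + f i y)
    (hmax : ∀ x : X, 0 ≤ Finset.univ.sup' ⟨⟨0, hn⟩, Finset.mem_univ _⟩ fun i => f i x) :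
    ∃ lam : Fin n → ℝ, (∀ i, 0 ≤ lam i) ∧ (∑ i, lam i = 1) ∧
      ∀ x : X, 0 ≤ ∑ i, lam i * f i x := by
  have : NeZero n := ⟨hn.ne'⟩
  obtain ⟨lam, ⟨hlam, hsum⟩, hnonneg⟩ := maximum_theorem_subadditive_general f hsub fun x =>
    ((Finset.le_sup'_iff _).1 (hmax x)).imp fun _ => And.right
  exact ⟨lam, hlam, hsum, hnonneg⟩
end

section
/- Let $X$ be a nonempty set and $f_1, \dots, f_n : X \to \mathbb{R}$ arbitrary functions. Then there exists $(\lambda_1, \dots, \lambda_n) \in S_n$ such that $0 \le \lambda_1 f_1(x) + \cdots + \lambda_n f_n(x)$ for all $x \in X$ if and only if $0 \le \max_{i \in \{1,\dots,n\}} \big( t_1 f_i(x_1) + \cdots + t_n f_i(x_n) \big)$ for all $x_1, \dots, x_n \in X$ and all $(t_1, \dots, t_n) \in S_n$. -/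
/-!
Put `F x = (f i x)ᵢ ∈ ℝ^ι`. Weights `lam` exist exactly when the cone generated by the vectors `F x`
misses the open negative orthant: a hyperplane separating the two passes through `0`, and its normal
vector has nonnegative coordinates, so it can be scaled into the simplex. It is enough to test conic
combinations of `card ι` of the vectors `F x`, since by the conic form of Carathéodory's theorem
every element of the cone is a nonnegative combination of linearly independent generators.
-/

open Finset

section ConicCaratheodory

theorem exists_family_sum_smul_eq_linearCombination {X R M : Type*} [Nonempty X] [Semiring R]
    [Preorder R] [AddCommMonoid M] [Module R M] {κ : Type*} [Fintype κ] (v : X → M) {d : X →₀ R}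
    (hd : 0 ≤ d) (hcard : #d.support ≤ Fintype.card κ) :
    ∃ (x : κ → X) (t : κ → R), 0 ≤ t ∧
      ∑ j, t j • v (x j) = Finsupp.linearCombination R v d := by
  obtain ⟨e⟩ : Nonempty (d.support ↪ κ) :=
    Function.Embedding.nonempty_of_card_le (by simpa using hcard)
  let x : κ → X := Function.extend e Subtype.val fun _ => Classical.arbitrary X
  let t : κ → R := Function.extend e (fun a => d a) 0
  have hx (a) : x (e a) = a := e.injective.extend_apply _ _ a
  have ht (a) : t (e a) = d a := e.injective.extend_apply _ _ a
  have ht0 (j) (hj : j ∉ Set.range e) : t j = 0 := Function.extend_apply' _ _ _ hj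
  refine ⟨x, t, fun j => ?_, ?_⟩
  · by_cases hj : j ∈ Set.range e
    · obtain ⟨a, rfl⟩ := hj
      exact (hd a).trans_eq (ht a).symm
    · exact (ht0 j hj).ge
  · calc
      ∑ j, t j • v (x j) = ∑ a : d.support, d a • v a :=
        (Fintype.sum_of_injective e e.injective _ _ (fun j hj => by rw [ht0 j hj, zero_smul])
          fun a => by rw [ht, hx]).symm
      _ = Finsupp.linearCombination R v d := by
        rw [Finsupp.linearCombination_apply, Finsupp.sum, sum_coe_sort d.support fun a => d a • v a]

variable {X 𝕜 E : Type*} [Field 𝕜] [LinearOrder 𝕜] [IsStrictOrderedRing 𝕜]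
  [AddCommGroup E] [Module 𝕜 E] {v : X → E} {s : Set X}

theorem exists_linearCombination_eq_zero_of_not_linearIndepOn (hv : ¬LinearIndepOn 𝕜 v s) :
    ∃ g ∈ Finsupp.supported 𝕜 𝕜 s, Finsupp.linearCombination 𝕜 v g = 0 ∧ ∃ a, 0 < g a := by
  rw [linearIndepOn_iff] at hv
  push Not at hv
  obtain ⟨g, hgs, hg, hg0⟩ := hv
  obtain ⟨a, ha⟩ := Finsupp.ne_iff.1 hg0
  rcases ha.lt_or_gt with hneg | hpos
  · exact ⟨-g, neg_mem hgs, by rw [map_neg, hg, neg_zero], a, by simpa using hneg⟩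
  · exact ⟨g, hgs, hg, a, hpos⟩

theorem exists_sub_smul_nonneg_of_exists_pos {c g : X →₀ 𝕜} (hc : 0 ≤ c) (hg : ∃ a, 0 < g a) :
    ∃ r : 𝕜, 0 ≤ c - r • g ∧ ∃ a, 0 < g a ∧ (c - r • g) a = 0 := by
  obtain ⟨b, hb⟩ := hg
  -- Moving from `c` in the direction `-g`, the coordinate with the least ratio `c x / g x`
  -- is the first to reach `0`.
  obtain ⟨a, ha, hmin⟩ := {x ∈ g.support | 0 < g x}.exists_min_image (fun x => c x / g x)
    ⟨b, by simp [hb, hb.ne']⟩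
  have hga : 0 < g a := (mem_filter.1 ha).2
  refine ⟨c a / g a, fun x => ?_, a, hga, by simp [hga.ne']⟩
  suffices c a / g a * g x ≤ c x by simpa using this
  rcases le_or_gt (g x) 0 with hx | hx
  · exact (mul_nonpos_of_nonneg_of_nonpos (div_nonneg (hc a) hga.le) hx).trans (hc x)
  · exact (le_div_iff₀ hx).1 (hmin x (by simp [hx, hx.ne']))

theorem exists_support_ssubset_of_not_linearIndepOn {c : X →₀ 𝕜} (hc : 0 ≤ c)
    (hv : ¬LinearIndepOn 𝕜 v c.support) :
    ∃ d : X →₀ 𝕜, 0 ≤ d ∧ d.support ⊂ c.support ∧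
      Finsupp.linearCombination 𝕜 v d = Finsupp.linearCombination 𝕜 v c := by
  obtain ⟨g, hgs, hg, hpos⟩ := exists_linearCombination_eq_zero_of_not_linearIndepOn hv
  obtain ⟨r, hd, a, hga, hda⟩ := exists_sub_smul_nonneg_of_exists_pos hc hpos
  have hgc : g.support ⊆ c.support := mod_cast (Finsupp.mem_supported 𝕜 g).1 hgs
  have hsub : (c - r • g).support ⊆ c.support := by
    classical
    exact Finsupp.support_sub.trans (union_subset subset_rfl (Finsupp.support_smul.trans hgc))
  refine ⟨c - r • g, hd, (ssubset_iff_of_subset hsub).2 ⟨a, hgc ?_, ?_⟩, ?_⟩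
  · exact Finsupp.mem_support_iff.2 hga.ne'
  · exact Finsupp.notMem_support_iff.2 hda
  · rw [map_sub, map_smul, hg, smul_zero, sub_zero]

theorem exists_linearIndepOn_support_linearCombination_eq (v : X → E) {c : X →₀ 𝕜} (hc : 0 ≤ c) :
    ∃ d : X →₀ 𝕜, 0 ≤ d ∧ LinearIndepOn 𝕜 v d.support ∧
      Finsupp.linearCombination 𝕜 v d = Finsupp.linearCombination 𝕜 v c := by
  induction hs : c.support using Finset.strongInduction generalizing c with
  | H s ih =>
    subst hs
    by_cases hv : LinearIndepOn 𝕜 v c.support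
    · exact ⟨c, hc, hv, rfl⟩
    · obtain ⟨d, hd, hss, hdc⟩ := exists_support_ssubset_of_not_linearIndepOn hc hv
      obtain ⟨e, he, hev, hed⟩ := ih d.support hss hd rfl
      exact ⟨e, he, hev, hed.trans hdc⟩

theorem exists_family_sum_smul_eq_of_finrank_le [Nonempty X] [Module.Finite 𝕜 E] {κ : Type*}
    [Fintype κ] (hκ : Module.finrank 𝕜 E ≤ Fintype.card κ) (v : X → E) {c : X →₀ 𝕜} (hc : 0 ≤ c) :
    ∃ (x : κ → X) (t : κ → 𝕜), 0 ≤ t ∧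
      ∑ j, t j • v (x j) = Finsupp.linearCombination 𝕜 v c := by
  obtain ⟨d, hd, hv, hdc⟩ := exists_linearIndepOn_support_linearCombination_eq v hc
  have hcard : #d.support ≤ Module.finrank 𝕜 E := by
    simpa using hv.linearIndependent.fintype_card_le_finrank
  rw [← hdc]
  exact exists_family_sum_smul_eq_linearCombination v hd (hcard.trans hκ)

end ConicCaratheodory

theorem inv_sum_smul_mem_stdSimplex {𝕜 ι : Type*} [Field 𝕜] [LinearOrder 𝕜]
    [IsStrictOrderedRing 𝕜] [Fintype ι] {w : ι → 𝕜} (hw : 0 ≤ w) (hsum : 0 < ∑ i, w i) :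
    (∑ i, w i)⁻¹ • w ∈ stdSimplex 𝕜 ι :=
  ⟨fun i => mul_nonneg (inv_nonneg.2 hsum.le) (hw i), by simp [← mul_sum, hsum.ne']⟩

section Separation

theorem geometric_hahn_banach_open_of_mem_closure {E : Type*} [TopologicalSpace E]
    [AddCommGroup E] [Module ℝ E] [IsTopologicalAddGroup E] [ContinuousSMul ℝ E] {s t : Set E}
    {p : E} (hs : Convex ℝ s) (hso : IsOpen s) (ht : Convex ℝ t) (hst : Disjoint s t)
    (hps : p ∈ closure s) (hpt : p ∈ t) :
    ∃ g : StrongDual ℝ E, (∀ a ∈ s, g a < g p) ∧ ∀ b ∈ t, g p ≤ g b := by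
  obtain ⟨g, u, hgs, hgt⟩ := geometric_hahn_banach_open hs hso ht hst
  have hpu : g p ≤ u :=
    le_on_closure (fun a ha => (hgs a ha).le) g.continuous.continuousOn continuousOn_const hps
  obtain rfl : g p = u := hpu.antisymm (hgt p hpt)
  exact ⟨g, hgs, hgt⟩

variable {ι : Type*}

theorem mem_closure_pi_Iio_zero {a : ι → ℝ} (ha : a ≤ 0) :
    a ∈ closure (Set.univ.pi fun _ => Set.Iio (0 : ℝ)) := by
  simp only [closure_pi_set, closure_Iio]
  exact fun i _ => ha i

variable [Fintype ι]

theorem exists_mem_stdSimplex_eq_mul_dotProduct [Nonempty ι] (g : StrongDual ℝ (ι → ℝ))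
    (hg : ∀ a : ι → ℝ, (∀ i, a i < 0) → g a < 0) :
    ∃ r > 0, ∃ lam ∈ stdSimplex ℝ ι, ∀ v, g v = r * (lam ⬝ᵥ v) := by
  classical
  let w : ι → ℝ := fun i => g (Pi.single i 1)
  have hgw (v : ι → ℝ) : g v = w ⬝ᵥ v := by
    conv_lhs => rw [pi_eq_sum_univ' v]
    simp [w, dotProduct, mul_comm]
  have hw (i) : 0 ≤ w i := by
    have hmem := mem_closure_pi_Iio_zero (a := -Pi.single i 1)
      (neg_nonpos.2 (Pi.single_nonneg.2 zero_le_one))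
    have hle : g (-Pi.single i 1) ≤ 0 :=
      le_on_closure (fun a ha => (hg a (Set.mem_univ_pi.1 ha)).le)
        g.continuous.continuousOn continuousOn_const hmem
    simpa [w] using hle
  have hsum : 0 < ∑ i, w i := by
    have hneg : g (-1) < 0 := hg (-1) fun _ => by simp
    simpa [hgw, dotProduct_one] using hneg
  refine ⟨∑ i, w i, hsum, (∑ i, w i)⁻¹ • w, inv_sum_smul_mem_stdSimplex hw hsum, fun v => ?_⟩
  rw [smul_dotProduct, smul_eq_mul, mul_inv_cancel_left₀ hsum.ne', hgw]

theorem exists_mem_stdSimplex_forall_dotProduct_nonneg {T : Set (ι → ℝ)} (hT : Convex ℝ T)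
    (h0 : 0 ∈ T) (h : ∀ v ∈ T, ∃ i, 0 ≤ v i) :
    ∃ lam ∈ stdSimplex ℝ ι, ∀ v ∈ T, 0 ≤ lam ⬝ᵥ v := by
  have : Nonempty ι := (h 0 h0).nonempty
  have hdisj : Disjoint (Set.univ.pi fun _ => Set.Iio 0) T :=
    Set.disjoint_left.2 fun v hneg hv => by
      obtain ⟨i, hi⟩ := h v hv
      exact hi.not_gt (hneg i trivial)
  obtain ⟨g, hneg, hnonneg⟩ := geometric_hahn_banach_open_of_mem_closure
    (convex_pi fun _ _ => convex_Iio 0) (isOpen_set_pi Set.finite_univ fun _ _ => isOpen_Iio)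
    hT hdisj (mem_closure_pi_Iio_zero le_rfl) h0
  rw [map_zero] at hneg hnonneg
  obtain ⟨r, hr, lam, hlam, hg⟩ :=
    exists_mem_stdSimplex_eq_mul_dotProduct g fun a ha => hneg a fun i _ => ha i
  exact ⟨lam, hlam, fun v hv => nonneg_of_mul_nonneg_right ((hnonneg v hv).trans_eq (hg v)) hr⟩

end Separation

section Alternative

variable {ι X 𝕜 : Type*} [Field 𝕜] [LinearOrder 𝕜] [IsStrictOrderedRing 𝕜]

theorem exists_nonneg_sum_mul_of_forall_mem_stdSimplex {κ : Type*} [Fintype κ] [Nonempty ι]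
    {A : ι → κ → 𝕜} (h : ∀ t ∈ stdSimplex 𝕜 κ, ∃ i, 0 ≤ ∑ j, t j * A i j) {t : κ → 𝕜}
    (ht : 0 ≤ t) : ∃ i, 0 ≤ ∑ j, t j * A i j := by
  rcases (sum_nonneg fun j (_ : j ∈ univ) => ht j).eq_or_lt with hzero | hpos
  · have ht0 : t = 0 := (Fintype.sum_eq_zero_iff_of_nonneg ht).1 hzero.symm
    simp [ht0]
  · obtain ⟨i, hi⟩ := h _ (inv_sum_smul_mem_stdSimplex ht hpos)
    refine ⟨i, nonneg_of_mul_nonneg_right ?_ (inv_pos.2 hpos)⟩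
    simpa [mul_sum, mul_assoc] using hi

variable [Fintype ι]

theorem dotProduct_le_sup'_of_mem_stdSimplex [Nonempty ι] {lam : ι → 𝕜}
    (hlam : lam ∈ stdSimplex 𝕜 ι) (v : ι → 𝕜) : lam ⬝ᵥ v ≤ univ.sup' univ_nonempty v := by
  have hle := centerMass_le_sup (f := v) (fun i (_ : i ∈ univ) => hlam.1 i) (by simp [hlam.2])
  rwa [centerMass_eq_of_sum_1 _ _ hlam.2] at hle

theorem exists_nonneg_linearCombination_apply [Nonempty ι] {f : ι → X → 𝕜}
    (h : ∀ x : ι → X, ∀ t ∈ stdSimplex 𝕜 ι, ∃ i, 0 ≤ ∑ j, t j * f i (x j))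
    {c : X →₀ 𝕜} (hc : 0 ≤ c) :
    ∃ i, 0 ≤ Finsupp.linearCombination 𝕜 (fun x i => f i x) c i := by
  rcases isEmpty_or_nonempty X
  · simp [Subsingleton.elim c 0]
  obtain ⟨x, t, ht, hsum⟩ := exists_family_sum_smul_eq_of_finrank_le (κ := ι)
    (Module.finrank_fintype_fun_eq_card 𝕜).le (fun x i => f i x) hc
  obtain ⟨i, hi⟩ := exists_nonneg_sum_mul_of_forall_mem_stdSimplex (h x) ht
  exact ⟨i, by simpa [← hsum] using hi⟩

theorem sup'_sum_mul_nonneg_of_mem_stdSimplex {κ : Type*} [Fintype κ] [Nonempty ι]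
    {f : ι → X → 𝕜} {lam : ι → 𝕜} (hlam : lam ∈ stdSimplex 𝕜 ι) (h : ∀ x, 0 ≤ ∑ i, lam i * f i x)
    (x : κ → X) {t : κ → 𝕜} (ht : 0 ≤ t) :
    0 ≤ univ.sup' univ_nonempty fun i => ∑ j, t j * f i (x j) :=
  calc
    0 ≤ ∑ j, t j * ∑ i, lam i * f i (x j) := sum_nonneg fun j _ => mul_nonneg (ht j) (h (x j))
    _ = ∑ i, lam i * ∑ j, t j * f i (x j) := by
      simp only [mul_sum, mul_left_comm]
      exact sum_comm
    _ ≤ _ := dotProduct_le_sup'_of_mem_stdSimplex hlam _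

theorem exists_mem_stdSimplex_forall_sum_mul_nonneg [Nonempty ι] {f : ι → X → ℝ}
    (h : ∀ x : ι → X, ∀ t ∈ stdSimplex ℝ ι, ∃ i, 0 ≤ ∑ j, t j * f i (x j)) :
    ∃ lam ∈ stdSimplex ℝ ι, ∀ x, 0 ≤ ∑ i, lam i * f i x := by
  let L := Finsupp.linearCombination ℝ fun x i => f i x
  obtain ⟨lam, hlam, hnonneg⟩ := exists_mem_stdSimplex_forall_dotProduct_nonneg
    ((convex_Ici (𝕜 := ℝ) (0 : X →₀ ℝ)).linear_image L) ⟨0, Set.self_mem_Ici, map_zero L⟩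
    (Set.forall_mem_image.2 fun _ hc => exists_nonneg_linearCombination_apply h hc)
  refine ⟨lam, hlam, fun x => hnonneg _ ⟨Finsupp.single x 1, ?_, by simp [L]⟩⟩
  exact Finsupp.single_nonneg.2 zero_le_one

theorem nonneg_convex_combination_iff_general [Nonempty ι] (f : ι → X → ℝ) :
    (∃ lam : ι → ℝ, (∀ i, 0 ≤ lam i) ∧ (∑ i, lam i = 1) ∧ ∀ x : X, 0 ≤ ∑ i, lam i * f i x) ↔
      ∀ (x : ι → X) (t : ι → ℝ), (∀ j, 0 ≤ t j) → (∑ j, t j = 1) →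
        0 ≤ univ.sup' univ_nonempty fun i => ∑ j, t j * f i (x j) := by
  constructor
  · rintro ⟨lam, hlam, hsum, hnonneg⟩ x t ht -
    exact sup'_sum_mul_nonneg_of_mem_stdSimplex ⟨hlam, hsum⟩ hnonneg x ht
  · intro h
    obtain ⟨lam, ⟨hlam, hsum⟩, hnonneg⟩ :=
      exists_mem_stdSimplex_forall_sum_mul_nonneg (f := f) fun x t ht => by
        simpa using h x t ht.1 ht.2
    exact ⟨lam, hlam, hsum, hnonneg⟩

end Alternative

/-- Characterization of the existence of a nonnegative convex combination of finitely
many functions. -/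
theorem nonneg_convex_combination_iff
    {X : Type*} [Nonempty X] {n : ℕ} (hn : 0 < n) (f : Fin n → X → ℝ) :
    (∃ lam : Fin n → ℝ, (∀ i, 0 ≤ lam i) ∧ (∑ i, lam i = 1) ∧
        ∀ x : X, 0 ≤ ∑ i, lam i * f i x) ↔
      (∀ (x : Fin n → X) (t : Fin n → ℝ), (∀ j, 0 ≤ t j) → (∑ j, t j = 1) →
        0 ≤ Finset.univ.sup' ⟨⟨0, hn⟩, Finset.mem_univ _⟩
          fun i => ∑ j, t j * f i (x j)) := by
  have : Nonempty (Fin n) := ⟨⟨0, hn⟩⟩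
  exact nonneg_convex_combination_iff_general f
end

section
/- Let $X$ be a nonempty set and $f, g : X \to \mathbb{R}$ arbitrary functions. Then there exists $\lambda \in [0,1]$ such that $0 \le \lambda f(x) + (1-\lambda) g(x)$ for all $x \in X$ if and only if $0 \le \max\big( t f(x) + (1-t) f(y),\ t g(x) + (1-t) g(y) \big)$ for all $x, y \in X$ and all $t \in [0,1]$. -/
/-! For each `x` the weights in `[0, 1]` that make the combination at `x` nonnegative form a compact
interval. By Helly's theorem in dimension one, a single weight serves all points as soon as every
two of these intervals meet. For two points, this is the minimax theorem for the `2 × 2` matrix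
game with payoffs `f x`, `f y`, `g x`, `g y`: unless one of the weights `0` and `1` works, both
players have an equalizing strategy, and the two strategies give the same value. -/

open Set Module

theorem nonempty_iInter_iff_forall_inter_of_finrank_eq_one
    {ι 𝕜 E : Type*} [Field 𝕜] [LinearOrder 𝕜] [IsStrictOrderedRing 𝕜] [AddCommGroup E] [Module 𝕜 E]
    [TopologicalSpace E] [T2Space E] (hE : finrank 𝕜 E = 1) {F : ι → Set E}
    (hconvex : ∀ i, Convex 𝕜 (F i)) (hcompact : ∀ i, IsCompact (F i)) :
    (⋂ i, F i).Nonempty ↔ ∀ i j, (F i ∩ F j).Nonempty := by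
  have : FiniteDimensional 𝕜 E := .of_finrank_eq_succ hE
  refine ⟨fun h i j ↦ h.mono (subset_inter (iInter_subset F i) (iInter_subset F j)), fun h ↦ ?_⟩
  refine Convex.helly_theorem_compact' hconvex hcompact fun I hI ↦ ?_
  rw [hE] at hI
  obtain hI | hI | hI : I.card = 0 ∨ I.card = 1 ∨ I.card = 2 := by lia
  · simp [Finset.card_eq_zero.mp hI]
  · obtain ⟨i, rfl⟩ := Finset.card_eq_one.mp hI
    simpa using h i i
  · classical
    obtain ⟨i, j, -, rfl⟩ := Finset.card_eq_two.mp hI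
    simpa using h i j

section NonnegWeights

variable {𝕜 : Type*}

/-- The weights `l ∈ [0, 1]` for which the convex combination of `a` and `b` with weight `l` on
the first entry is nonnegative; for `a = f x` and `b = g x`, the constraint that the point `x`
imposes on the common weight. -/
def nonnegWeights [Ring 𝕜] [Preorder 𝕜] (a b : 𝕜) : Set 𝕜 :=
  {l ∈ Icc 0 1 | 0 ≤ l * a + (1 - l) * b}

theorem isCompact_nonnegWeights [Ring 𝕜] [Preorder 𝕜] [TopologicalSpace 𝕜]
    [OrderClosedTopology 𝕜] [CompactIccSpace 𝕜] [IsTopologicalRing 𝕜] (a b : 𝕜) :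
    IsCompact (nonnegWeights a b) :=
  isCompact_Icc.inter_right (isClosed_le (by fun_prop) (by fun_prop))

theorem convex_nonnegWeights [CommRing 𝕜] [PartialOrder 𝕜] [IsOrderedRing 𝕜] (a b : 𝕜) :
    Convex 𝕜 (nonnegWeights a b) := by
  have h_preimage : nonnegWeights a b = Icc 0 1 ∩ AffineMap.lineMap b a ⁻¹' Ici (0 : 𝕜) := by
    ext l
    simp [nonnegWeights, AffineMap.lineMap_apply_ring, add_comm]
  rw [h_preimage]
  exact (convex_Icc 0 1).inter ((convex_Ici 0).affine_preimage _)

theorem max_nonneg_of_mem_nonnegWeights [CommRing 𝕜] [LinearOrder 𝕜] [IsOrderedRing 𝕜]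
    {a b c d l t : 𝕜} (hac : l ∈ nonnegWeights a c) (hbd : l ∈ nonnegWeights b d)
    (ht : t ∈ Icc 0 1) :
    0 ≤ max (t * a + (1 - t) * b) (t * c + (1 - t) * d) := by
  obtain ⟨⟨hl₀, hl₁⟩, hac⟩ := hac
  calc 0 ≤ t * (l * a + (1 - l) * c) + (1 - t) * (l * b + (1 - l) * d) :=
        add_nonneg (mul_nonneg ht.1 hac) (mul_nonneg (sub_nonneg.mpr ht.2) hbd.2)
    _ = l * (t * a + (1 - t) * b) + (1 - l) * (t * c + (1 - t) * d) := by ring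
    _ ≤ max (t * a + (1 - t) * b) (t * c + (1 - t) * d) :=
        Convex.combo_le_max _ _ hl₀ (sub_nonneg.mpr hl₁) (add_sub_cancel _ _)

variable [Field 𝕜] [LinearOrder 𝕜] [IsStrictOrderedRing 𝕜]

theorem exists_equalizing_weights {a b c d : 𝕜} (hba : b < a) (hca : c ≤ a) (hbd : b ≤ d)
    (hcd : c ≤ d) :
    ∃ p ∈ Icc (0 : 𝕜) 1, ∃ q ∈ Icc (0 : 𝕜) 1, ∃ v,
      (p * a + (1 - p) * c = v ∧ p * b + (1 - p) * d = v) ∧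
        (q * a + (1 - q) * b = v ∧ q * c + (1 - q) * d = v) := by
  have hD : 0 < a - b - c + d := by linarith
  refine ⟨(d - c) / (a - b - c + d), ⟨?_, ?_⟩, (d - b) / (a - b - c + d), ⟨?_, ?_⟩,
    (a * d - b * c) / (a - b - c + d), ⟨?_, ?_⟩, ?_, ?_⟩
  · exact div_nonneg (by linarith) hD.le
  · exact (div_le_one hD).mpr (by linarith)
  · exact div_nonneg (by linarith) hD.le
  · exact (div_le_one hD).mpr (by linarith)
  all_goals (field_simp; ring)

theorem nonempty_nonnegWeights_inter_of_neg {a b c d : 𝕜} (hb : b < 0) (hc : c < 0)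
    (h : ∀ t ∈ Icc (0 : 𝕜) 1, 0 ≤ max (t * a + (1 - t) * b) (t * c + (1 - t) * d)) :
    (nonnegWeights a c ∩ nonnegWeights b d).Nonempty := by
  have ha : 0 ≤ a := by simpa [hc.not_ge] using h 1 (by simp)
  have hd : 0 ≤ d := by simpa [hb.not_ge] using h 0 (by simp)
  obtain ⟨p, hp, q, hq, v, ⟨hpac, hpbd⟩, hqab, hqcd⟩ :=
    exists_equalizing_weights (hb.trans_le ha) (hc.le.trans ha) (hb.le.trans hd) (hc.le.trans hd)
  have hv : 0 ≤ v := by simpa [hqab, hqcd] using h q hq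
  exact ⟨p, ⟨hp, hv.trans_eq hpac.symm⟩, hp, hv.trans_eq hpbd.symm⟩

theorem nonempty_nonnegWeights_inter_iff {a b c d : 𝕜} :
    (nonnegWeights a c ∩ nonnegWeights b d).Nonempty ↔
      ∀ t ∈ Icc (0 : 𝕜) 1, 0 ≤ max (t * a + (1 - t) * b) (t * c + (1 - t) * d) := by
  refine ⟨fun ⟨_, hac, hbd⟩ _ ht ↦ max_nonneg_of_mem_nonnegWeights hac hbd ht, fun h ↦ ?_⟩
  have hac : 0 ≤ a ∨ 0 ≤ c := by simpa using h 1 (by simp)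
  have hbd : 0 ≤ b ∨ 0 ≤ d := by simpa using h 0 (by simp)
  by_cases hab : 0 ≤ a ∧ 0 ≤ b
  · exact ⟨1, by simp [nonnegWeights, hab]⟩
  by_cases hcd : 0 ≤ c ∧ 0 ≤ d
  · exact ⟨0, by simp [nonnegWeights, hcd]⟩
  obtain ⟨hb, hc⟩ | ⟨ha, hd⟩ : (b < 0 ∧ c < 0) ∨ (a < 0 ∧ d < 0) := by grind
  · exact nonempty_nonnegWeights_inter_of_neg hb hc h
  · rw [inter_comm]
    refine nonempty_nonnegWeights_inter_of_neg ha hd fun t ht ↦ ?_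
    simpa [add_comm] using h (1 - t) (Icc.one_sub_mem ht)

end NonnegWeights

/-- Characterization of the existence of a nonnegative convex combination of two
functions. -/
theorem nonneg_convex_combination_iff_two
    {X : Type*} [Nonempty X] (f g : X → ℝ) :
    (∃ lam ∈ Set.Icc (0:ℝ) 1, ∀ x : X, 0 ≤ lam * f x + (1 - lam) * g x) ↔
      (∀ x y : X, ∀ t ∈ Set.Icc (0:ℝ) 1,
        0 ≤ max (t * f x + (1 - t) * f y) (t * g x + (1 - t) * g y)) := by
  calc (∃ lam ∈ Icc (0 : ℝ) 1, ∀ x, 0 ≤ lam * f x + (1 - lam) * g x)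
    _ ↔ (⋂ x, nonnegWeights (f x) (g x)).Nonempty := by
        simp only [nonnegWeights, Set.Nonempty, mem_iInter, mem_ofPred_eq, forall_and, forall_const]
    _ ↔ ∀ x y, (nonnegWeights (f x) (g x) ∩ nonnegWeights (f y) (g y)).Nonempty :=
        nonempty_iInter_iff_forall_inter_of_finrank_eq_one (finrank_self ℝ)
          (fun x ↦ convex_nonnegWeights (f x) (g x)) fun x ↦ isCompact_nonnegWeights (f x) (g x)
    _ ↔ _ := forall₂_congr fun _ _ ↦ nonempty_nonnegWeights_inter_iff
end

section
/- Let $X$ be a nonempty set, $\circ : X \times X \to X$ a binary operation, and $p, q > 0$ constants. Define $S \subseteq [0,1]$ as the set of all numbers of the form $\frac{a}{a+b}$ with $a, b > 0$ for which there exists a binary operation $* : X \times X \to X$ such that every $(\circ, p, q)$-convex function $f : X \to \mathbb{R}$ is $(*, a, b)$-convex. Then: (i) $\frac{p}{p+q} \in S$; (ii) $1 - S \subseteq S$, i.e., if $s \in S$ then $1 - s \in S$; (iii) $S$ is closed under multiplication, i.e., if $s, t \in S$ then $s t \in S$; and (iv) $S$ is dense in $[0,1]$. -/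
/-- A function `f : X → ℝ` is `(op, p, q)`-convex if `f (op x y) ≤ p * f x + q * f y`
for all `x, y`. -/
def PQConvex {X : Type*} (op : X → X → X) (p q : ℝ) (f : X → ℝ) : Prop :=
  ∀ x y : X, f (op x y) ≤ p * f x + q * f y

/-!
Composing convexity inequalities multiplies ratios and exchanging the two arguments replaces `s` by
`1 - s`. Any set closed under both operations that contains some `s` in `(0, 1)` is dense in
`[0, 1]`: for large `n`, `r = s ^ n` is small, and consecutive powers of `1 - r` differ by at
most `r`, so they meet every interval of length greater than `r` in `[0, 1]`.
-/

section DenseInUnitInterval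

theorem pow_succ_mem_of_mul_mem {M : Type*} [Monoid M] {S : Set M} {s : M}
    (h_mul : ∀ s ∈ S, ∀ t ∈ S, s * t ∈ S) (hs : s ∈ S) (n : ℕ) : s ^ (n + 1) ∈ S := by
  induction n with
  | zero => simpa only [zero_add, pow_one] using hs
  | succ n ih => exact pow_succ s (n + 1) ▸ h_mul _ ih _ hs

variable {K : Type*} [Field K] [LinearOrder K] [IsStrictOrderedRing K] [Archimedean K]
  {S : Set K} {s a b : K}

theorem exists_pow_succ_mem_Ioo (hs₀ : 0 < s) (hs₁ : s < 1) (hb₀ : 0 < b) (hb₁ : b ≤ 1)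
    (h_gap : 1 - s < b - a) : ∃ n : ℕ, s ^ (n + 1) ∈ Set.Ioo a b := by
  obtain ⟨n, h_lt, h_le⟩ := exists_nat_pow_near_of_lt_one hb₀ hb₁ hs₀ hs₁
  refine ⟨n, ?_, h_lt⟩
  calc a < b - (1 - s) := lt_sub_comm.1 h_gap
    _ ≤ b - b * (1 - s) := by
      gcongr
      exact mul_le_of_le_one_left (sub_nonneg.2 hs₁.le) hb₁
    _ = b * s := by ring
    _ ≤ s ^ n * s := by gcongr
    _ = s ^ (n + 1) := (pow_succ s n).symm

theorem inter_Ioo_nonempty_of_mul_mem_of_one_sub_mem (h_mul : ∀ s ∈ S, ∀ t ∈ S, s * t ∈ S)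
    (h_sub : ∀ s ∈ S, 1 - s ∈ S) (hs : s ∈ S) (hs₀ : 0 < s) (hs₁ : s < 1)
    (hb₀ : 0 < b) (hb₁ : b ≤ 1) (hab : a < b) : (S ∩ Set.Ioo a b).Nonempty := by
  obtain ⟨n, hn⟩ := exists_pow_lt_of_lt_one (sub_pos.2 hab) hs₁
  have h_small : s ^ (n + 1) < b - a :=
    (pow_le_pow_of_le_one hs₀.le hs₁.le n.le_succ).trans_lt hn
  have h_pos : 0 < s ^ (n + 1) := pow_pos hs₀ _
  have h_lt_one : s ^ (n + 1) < 1 := pow_lt_one₀ hs₀.le hs₁ n.succ_ne_zero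
  obtain ⟨m, hm⟩ := exists_pow_succ_mem_Ioo (sub_pos.2 h_lt_one) (sub_lt_self 1 h_pos) hb₀ hb₁
    ((sub_sub_cancel 1 _).trans_lt h_small)
  have h_base : 1 - s ^ (n + 1) ∈ S := h_sub _ (pow_succ_mem_of_mul_mem h_mul hs n)
  exact ⟨_, pow_succ_mem_of_mul_mem h_mul h_base m, hm⟩

theorem Icc_subset_closure_of_mul_mem_of_one_sub_mem [TopologicalSpace K] [OrderTopology K]
    (h_mul : ∀ s ∈ S, ∀ t ∈ S, s * t ∈ S) (h_sub : ∀ s ∈ S, 1 - s ∈ S)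
    (hs : s ∈ S) (hs₀ : 0 < s) (hs₁ : s < 1) : Set.Icc 0 1 ⊆ closure S := by
  rw [← closure_Ioo (zero_ne_one' K)]
  refine closure_minimal (fun x hx ↦ mem_closure_iff.2 fun U hU hxU ↦ ?_) isClosed_closure
  obtain ⟨a, b, hab, h_Ioo⟩ := (hU.inter isOpen_Ioo).exists_Ioo_subset ⟨x, hxU, hx⟩
  obtain ⟨h_Ioo_U, h_Ioo_unit⟩ := Set.subset_inter_iff.1 h_Ioo
  obtain ⟨ha, hb⟩ := (Set.Ioo_subset_Ioo_iff hab).1 h_Ioo_unit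
  obtain ⟨y, hyS, hy⟩ := inter_Ioo_nonempty_of_mul_mem_of_one_sub_mem h_mul h_sub hs hs₀ hs₁
    (ha.trans_lt hab) hb hab
  exact ⟨y, h_Ioo_U hy, hyS⟩

end DenseInUnitInterval

namespace PQConvex

variable {X : Type*} {f : X → ℝ} {star dia dia' : X → X → X} {a b c d c' d' : ℝ}

theorem swap (hf : PQConvex star a b f) : PQConvex (fun x y ↦ star y x) b a f :=
  fun x y ↦ (hf y x).trans_eq (add_comm _ _)

theorem diag (hf : PQConvex star a b f) : PQConvex (fun _ y ↦ star y y) 0 (a + b) f :=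
  fun x y ↦ (hf y y).trans_eq (by ring)

theorem comp (ha : 0 ≤ a) (hb : 0 ≤ b) (hstar : PQConvex star a b f)
    (hdia : PQConvex dia c d f) (hdia' : PQConvex dia' c' d' f) :
    PQConvex (fun x y ↦ star (dia x y) (dia' x y)) (a * c + b * c') (a * d + b * d') f :=
  fun x y ↦ calc
    f (star (dia x y) (dia' x y)) ≤ a * f (dia x y) + b * f (dia' x y) := hstar _ _
    _ ≤ a * (c * f x + d * f y) + b * (c' * f x + d' * f y) := by
      gcongr
      exacts [hdia x y, hdia' x y]
    _ = (a * c + b * c') * f x + (a * d + b * d') * f y := by ring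

end PQConvex

/-- The ratios `a / (a + b)` of the positive weights for which some binary operation on `X` makes
every function of the family `F` `(*, a, b)`-convex. The set `S` of the theorem is the case where
`F` consists of all `(∘, p, q)`-convex functions. -/
def convexityRatios {X : Type*} (F : Set (X → ℝ)) : Set ℝ :=
  {s | ∃ a b : ℝ, 0 < a ∧ 0 < b ∧ s = a / (a + b) ∧
    ∃ star : X → X → X, ∀ f ∈ F, PQConvex star a b f}

namespace convexityRatios

variable {X : Type*} {F : Set (X → ℝ)} {s t : ℝ}

theorem subset_Ioo : convexityRatios F ⊆ Set.Ioo 0 1 := by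
  rintro _ ⟨a, b, ha, hb, rfl, -⟩
  exact ⟨by positivity, (div_lt_one (by positivity)).2 (lt_add_of_pos_right a hb)⟩

theorem one_sub_mem (hs : s ∈ convexityRatios F) : 1 - s ∈ convexityRatios F := by
  obtain ⟨a, b, ha, hb, rfl, star, hstar⟩ := hs
  refine ⟨b, a, hb, ha, ?_, fun x y ↦ star y x, fun f hf ↦ (hstar f hf).swap⟩
  rw [one_sub_div (by positivity), add_sub_cancel_left, add_comm]

-- The diagonal second argument puts the weight `b * (c + d)` on `y` alone, so that the weight of
-- `x` is `a * c` while the total weight is `(a + b) * (c + d)`.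
theorem mul_mem (hs : s ∈ convexityRatios F) (ht : t ∈ convexityRatios F) :
    s * t ∈ convexityRatios F := by
  obtain ⟨a, b, ha, hb, rfl, star, hstar⟩ := hs
  obtain ⟨c, d, hc, hd, rfl, dia, hdia⟩ := ht
  refine ⟨a * c + b * 0, a * d + b * (c + d), by positivity, by positivity, ?_,
    fun x y ↦ star (dia x y) (dia y y),
    fun f hf ↦ (hstar f hf).comp ha.le hb.le (hdia f hf) (hdia f hf).diag⟩
  rw [div_mul_div_comm]
  congr 1 <;> ring

theorem Icc_subset_closure (h : (convexityRatios F).Nonempty) :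
    Set.Icc 0 1 ⊆ closure (convexityRatios F) := by
  obtain ⟨s, hs⟩ := h
  obtain ⟨hs₀, hs₁⟩ := subset_Ioo hs
  exact Icc_subset_closure_of_mul_mem_of_one_sub_mem (fun _ hs _ ht ↦ mul_mem hs ht)
    (fun _ hs ↦ one_sub_mem hs) hs hs₀ hs₁

end convexityRatios

theorem ratio_set_properties_general {X : Type*} {F : Set (X → ℝ)} {circ : X → X → X}
    {p q : ℝ} (hp : 0 < p) (hq : 0 < q) (hF : ∀ f ∈ F, PQConvex circ p q f) :
    p / (p + q) ∈ convexityRatios F ∧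
      (∀ s ∈ convexityRatios F, 1 - s ∈ convexityRatios F) ∧
      (∀ s ∈ convexityRatios F, ∀ t ∈ convexityRatios F, s * t ∈ convexityRatios F) ∧
      ∀ x ∈ Set.Icc (0 : ℝ) 1, x ∈ closure (convexityRatios F) :=
  have h_mem : p / (p + q) ∈ convexityRatios F := ⟨p, q, hp, hq, rfl, circ, hF⟩
  ⟨h_mem, fun _ hs ↦ convexityRatios.one_sub_mem hs,
    fun _ hs _ ht ↦ convexityRatios.mul_mem hs ht,
    fun _ hx ↦ convexityRatios.Icc_subset_closure ⟨_, h_mem⟩ hx⟩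

/-- The set `S` of ratios `a / (a + b)` for which some binary operation `*` makes every
`(∘, p, q)`-convex function `(*, a, b)`-convex contains `p / (p + q)`, satisfies
`1 - S ⊆ S`, is closed under multiplication, and is dense in `[0, 1]`. -/
theorem ratio_set_properties
    {X : Type*} [Nonempty X] (circ : X → X → X) {p q : ℝ} (hp : 0 < p) (hq : 0 < q) :
    let S : Set ℝ := {s | ∃ a b : ℝ, 0 < a ∧ 0 < b ∧ s = a / (a + b) ∧
      ∃ star : X → X → X, ∀ f : X → ℝ, PQConvex circ p q f → PQConvex star a b f}
    (p / (p + q) ∈ S) ∧ (∀ s ∈ S, 1 - s ∈ S) ∧ (∀ s ∈ S, ∀ t ∈ S, s * t ∈ S) ∧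
      (∀ x ∈ Set.Icc (0:ℝ) 1, x ∈ closure S) :=
  ratio_set_properties_general (F := {f | PQConvex circ p q f}) hp hq fun _ hf ↦ hf
end

section
/- Let $X$ be a nonempty set, $\circ : X \times X \to X$ a binary operation, and $p, q > 0$ constants. Define $S \subseteq [0,1]$ as the set of all numbers of the form $\frac{a}{a+b}$ with $a, b > 0$ for which there exists a binary operation $* : X \times X \to X$ such that every $(\circ, p, q)$-convex function $f : X \to \mathbb{R}$ is $(*, a, b)$-convex. If $s \in S$ and $n \in \mathbb{N}$ with $n \ge 1$, then $s^n \in S$. -/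
/-!
The ratio set is closed under products: if `*` realizes `a / (a + b)` and `⋆` realizes
`c / (c + d)`, then `(x ⋆ y) * (y ⋆ y)` has weight `a * c` on `x` and total weight
`(a + b) * (c + d)`.
-/

section RatioSet

variable {X : Type*}

namespace PQConvex

variable {op op₁ op₂ : X → X → X} {p q p₁ q₁ p₂ q₂ : ℝ} {f : X → ℝ}

theorem diag_right (h : PQConvex op p q f) : PQConvex (fun _ y => op y y) 0 (p + q) f :=
  fun _ y => (h y y).trans_eq (by ring)

theorem comp_s9 (h : PQConvex op p q f) (h₁ : PQConvex op₁ p₁ q₁ f) (h₂ : PQConvex op₂ p₂ q₂ f)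
    (hp : 0 ≤ p) (hq : 0 ≤ q) :
    PQConvex (fun x y => op (op₁ x y) (op₂ x y)) (p * p₁ + q * p₂) (p * q₁ + q * q₂) f :=
  fun x y => calc
    f (op (op₁ x y) (op₂ x y)) ≤ p * f (op₁ x y) + q * f (op₂ x y) := h _ _
    _ ≤ p * (p₁ * f x + q₁ * f y) + q * (p₂ * f x + q₂ * f y) := by
      gcongr
      exacts [h₁ x y, h₂ x y]
    _ = (p * p₁ + q * p₂) * f x + (p * q₁ + q * q₂) * f y := by ring

end PQConvex

/-- The set `S` of the ratios `a / (a + b)`, with `a, b > 0`, for which a single binary operation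
makes every function of the family `F` convex with weights `a` and `b`. The paper's `S` is the case
where `F` consists of the `(∘, p, q)`-convex functions. -/
def ratioSet (F : Set (X → ℝ)) : Set ℝ :=
  {s | ∃ a b : ℝ, 0 < a ∧ 0 < b ∧ s = a / (a + b) ∧
    ∃ star : X → X → X, ∀ f ∈ F, PQConvex star a b f}

theorem mul_mem_ratioSet {F : Set (X → ℝ)} {s t : ℝ} (hs : s ∈ ratioSet F) (ht : t ∈ ratioSet F) :
    s * t ∈ ratioSet F := by
  obtain ⟨a, b, ha, hb, rfl, op, h⟩ := hs
  obtain ⟨c, d, hc, hd, rfl, op', h'⟩ := ht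
  refine ⟨a * c + b * 0, a * d + b * (c + d), by positivity, by positivity, ?_,
    fun x y => op (op' x y) (op' y y),
    fun f hf => (h f hf).comp_s9 (h' f hf) (h' f hf).diag_right ha.le hb.le⟩
  rw [div_mul_div_comm]
  congr 1 <;> ring

theorem ratio_set_pow_general {F : Set (X → ℝ)} {s : ℝ} (hs : s ∈ ratioSet F) {n : ℕ}
    (hn : 1 ≤ n) : s ^ n ∈ ratioSet F := by
  induction n, hn using Nat.le_induction with
  | base => rwa [pow_one]
  | succ k _ ih => exact pow_succ s k ▸ mul_mem_ratioSet ih hs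

end RatioSet

/-- The set `S` of ratios `a / (a + b)` for which some binary operation `*` makes every
`(∘, p, q)`-convex function `(*, a, b)`-convex is closed under taking positive powers. -/
theorem ratio_set_pow
    {X : Type*} [Nonempty X] (circ : X → X → X) {p q : ℝ} (hp : 0 < p) (hq : 0 < q)
    {s : ℝ}
    (hs : s ∈ {s | ∃ a b : ℝ, 0 < a ∧ 0 < b ∧ s = a / (a + b) ∧
      ∃ star : X → X → X, ∀ f : X → ℝ, PQConvex circ p q f → PQConvex star a b f})
    {n : ℕ} (hn : 1 ≤ n) :
    s ^ n ∈ {s | ∃ a b : ℝ, 0 < a ∧ 0 < b ∧ s = a / (a + b) ∧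
      ∃ star : X → X → X, ∀ f : X → ℝ, PQConvex circ p q f → PQConvex star a b f} :=
  ratio_set_pow_general (F := {f | PQConvex circ p q f}) hs hn
end

section
/- Let $X$ be a nonempty set, $\circ : X \times X \to X$ a binary operation, and $p, q > 0$ constants. If $f, g : X \to \mathbb{R}$ are $(\circ, p, q)$-convex functions satisfying $0 \le \max(f(x), g(x))$ for all $x \in X$, then there exists $\lambda \in [0,1]$ such that $0 \le \lambda f(x) + (1-\lambda) g(x)$ for all $x \in X$. -/
/-! The argument works for any finite family `f`. Collect the vectors `v` for which some `x` and `n`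
satisfy `f i x ≤ (p + q) ^ n * v i` for all `i`. Passing from `x` to `circ x x` raises `n` by one,
so two such vectors admit a common `n`, and then `circ x y` shows that their convex combination
with weights `p / (p + q)` and `q / (p + q)` is again such a vector. The closure of this set is
therefore convex. It does not meet the open negative orthant, and the coefficients of a separating
linear functional, normalized, are the desired weights. -/

open AffineMap Set

section ConvexClosure

lemma lineMap_pow_mem {R V : Type*} [Ring R] [AddCommGroup V] [Module R V] {s : Set V} {r : R}
    (hs : ∀ u ∈ s, ∀ v ∈ s, lineMap u v r ∈ s) {u v : V} (hu : u ∈ s) (hv : v ∈ s) (n : ℕ) :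
    lineMap u v (r ^ n) ∈ s := by
  induction n with
  | zero => simpa using hv
  | succ n ih =>
    rw [pow_succ', ← lineMap_lineMap_right]
    exact hs u hu _ ih

variable {E : Type*} [AddCommGroup E] [Module ℝ E] [TopologicalSpace E] [IsTopologicalAddGroup E]
  [ContinuousSMul ℝ E] {s : Set E} {r : ℝ}

lemma convex_of_isClosed_of_lineMap_mem (hclosed : IsClosed s) (hr₀ : 0 < r) (hr₁ : r < 1)
    (hs : ∀ u ∈ s, ∀ v ∈ s, lineMap u v r ∈ s) : Convex ℝ s := by
  refine convex_iff_segment_subset.2 fun u hu v hv => ?_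
  rw [segment_eq_image_lineMap, image_subset_iff]
  set T : Set ℝ := lineMap u v ⁻¹' s
  have hT_closed : IsClosed T := hclosed.preimage lineMap_continuous
  have hT_mem : ∀ t ∈ T, ∀ t' ∈ T, lineMap t t' r ∈ T := fun t ht t' ht' => by
    simpa only [T, mem_preimage, apply_lineMap] using hs _ ht _ ht'
  have hT_one : (1 : ℝ) ∈ T := by simpa [T] using hv
  refine (hT_closed.inter isClosed_Icc).Icc_subset_of_forall_exists_gt (by simpa [T] using hu) ?_
  -- The points `lineMap t 1 (r ^ n)` of `T` decrease to `t`.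
  rintro t ⟨ht, ht₀, ht₁⟩ t' (htt' : t < t')
  obtain ⟨n, hn⟩ := exists_pow_lt_of_lt_one (sub_pos.2 htt') hr₁
  have hpow : 0 < r ^ n := pow_pos hr₀ n
  refine ⟨lineMap t 1 (r ^ n), lineMap_pow_mem hT_mem ht hT_one n, ?_⟩
  rw [lineMap_apply_ring']
  constructor <;> nlinarith

lemma convex_closure_of_lineMap_mem (hr₀ : 0 < r) (hr₁ : r < 1)
    (hs : ∀ u ∈ s, ∀ v ∈ s, lineMap u v r ∈ s) : Convex ℝ (closure s) := by
  refine convex_of_isClosed_of_lineMap_mem isClosed_closure hr₀ hr₁ fun u hu v hv => ?_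
  have hcont : Continuous fun z : E × E => lineMap z.1 z.2 r := by
    simp only [lineMap_apply_module]
    fun_prop
  exact map_mem_closure₂ (f := fun x y => lineMap x y r) hcont hu hv hs

end ConvexClosure

lemma exists_nonpos_nonneg_of_disjoint_open_cone {E : Type*} [AddCommGroup E] [Module ℝ E]
    [TopologicalSpace E] [IsTopologicalAddGroup E] [ContinuousSMul ℝ E] {K C : Set E}
    (hK : Convex ℝ K) (hK_open : IsOpen K) (hK_smul : ∀ t : ℝ, 0 < t → ∀ x ∈ K, t • x ∈ K)
    (hK_nonempty : K.Nonempty) (hC : Convex ℝ C) (hC_nonempty : C.Nonempty)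
    (hdisj : Disjoint K C) :
    ∃ φ : StrongDual ℝ E, φ ≠ 0 ∧ (∀ x ∈ K, φ x ≤ 0) ∧ ∀ x ∈ C, 0 ≤ φ x := by
  obtain ⟨φ, u, hφK, hφC⟩ := geometric_hahn_banach_open hK hK_open hC hdisj
  obtain ⟨x₀, hx₀⟩ := hK_nonempty
  obtain ⟨y₀, hy₀⟩ := hC_nonempty
  have hscale : ∀ x ∈ K, ∀ t : ℝ, 0 < t → t * φ x < u := fun x hx t ht => by
    simpa using hφK _ (hK_smul t ht x hx)
  have hu : 0 ≤ u := by
    by_contra! hu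
    have hneg : φ x₀ < 0 := (hφK x₀ hx₀).trans hu
    have := hscale x₀ hx₀ (u / φ x₀) (div_pos_of_neg_of_neg hu hneg)
    rw [div_mul_cancel₀ _ hneg.ne] at this
    exact this.false
  refine ⟨φ, ?_, fun x hx => ?_, fun y hy => hu.trans (hφC y hy)⟩
  · rintro rfl
    exact ((hφK x₀ hx₀).trans_le (hφC y₀ hy₀)).false
  · by_contra! hpos
    have := hscale x hx ((u + 1) / φ x) (by positivity)
    rw [div_mul_cancel₀ _ hpos.ne'] at this
    linarith

lemma exists_pos_smul_mem_stdSimplex {𝕜 ι : Type*} [Field 𝕜] [LinearOrder 𝕜]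
    [IsStrictOrderedRing 𝕜] [Fintype ι] {a : ι → 𝕜} (ha : 0 ≤ a) (ha₀ : a ≠ 0) :
    ∃ c : 𝕜, 0 < c ∧ c • a ∈ stdSimplex 𝕜 ι := by
  have hsum : 0 < ∑ i, a i := Fintype.sum_pos (lt_of_le_of_ne ha ha₀.symm)
  refine ⟨(∑ i, a i)⁻¹, inv_pos.2 hsum, fun i => ?_, ?_⟩
  · exact mul_nonneg (inv_nonneg.2 hsum.le) (ha i)
  · simp [← Finset.mul_sum, hsum.ne']

lemma exists_mem_stdSimplex_sum_nonneg_of_disjoint {ι : Type*} [Fintype ι] {C : Set (ι → ℝ)}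
    (hC : Convex ℝ C) (hC_nonempty : C.Nonempty) (hdisj : Disjoint (univ.pi fun _ => Iio 0) C) :
    ∃ w ∈ stdSimplex ℝ ι, ∀ v ∈ C, 0 ≤ ∑ i, w i * v i := by
  classical
  obtain ⟨φ, hφ₀, hφ_neg, hφC⟩ := exists_nonpos_nonneg_of_disjoint_open_cone
    (convex_pi fun _ _ => convex_Iio 0) (isOpen_set_pi finite_univ fun _ _ => isOpen_Iio)
    (fun t ht x hx i hi => mul_neg_of_pos_of_neg ht (hx i hi))
    (univ_pi_nonempty_iff.2 fun _ => nonempty_Iio) hC hC_nonempty hdisj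
  have hφ_nonpos : ∀ v ≤ 0, φ v ≤ 0 := fun v hv => by
    refine closure_minimal hφ_neg (isClosed_le φ.continuous continuous_const) ?_
    simpa [closure_pi_set, Pi.le_def] using hv
  set a : ι → ℝ := fun i => φ (Pi.single i 1)
  have hφ_eq : ∀ v, φ v = ∑ i, v i * a i := fun v => by
    conv_lhs => rw [pi_eq_sum_univ' v]
    simp [a]
  have ha : 0 ≤ a := fun i => by
    simpa [a] using hφ_nonpos (-Pi.single i 1) (by simp)
  have ha₀ : a ≠ 0 := fun h => hφ₀ <| by
    ext v
    simp [hφ_eq, h]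
  obtain ⟨c, hc, hca⟩ := exists_pos_smul_mem_stdSimplex ha ha₀
  refine ⟨c • a, hca, fun v hv => ?_⟩
  have : ∑ i, (c • a) i * v i = c * φ v := by
    simp [hφ_eq, Finset.mul_sum, mul_assoc, mul_comm (v _)]
  exact this ▸ mul_nonneg hc.le (hφC v hv)

/-- The vectors that dominate a value `(f i x)ᵢ` of the family `f` after multiplication by some
power of `c`. For `c ≠ 0` this is the smallest superset of the vector-valued epigraph of `f` that is
stable under division by `c`; it is used with `c = p + q`. -/
def scaledEpigraph {ι X : Type*} (c : ℝ) (f : ι → X → ℝ) : Set (ι → ℝ) :=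
  {v | ∃ (n : ℕ) (x : X), ∀ i, f i x ≤ c ^ n * v i}

namespace PQConvex

variable {ι X : Type*} {op : X → X → X} {p q : ℝ}

lemma apply_op_le {f : X → ℝ} (hf : PQConvex op p q f) (hp : 0 ≤ p) (hq : 0 ≤ q) {x y : X}
    {a b : ℝ} (hx : f x ≤ a) (hy : f y ≤ b) : f (op x y) ≤ p * a + q * b :=
  (hf x y).trans (by gcongr)

variable {f : ι → X → ℝ}

lemma exists_le_pow_mul_of_le (hf : ∀ i, PQConvex op p q (f i)) (hp : 0 ≤ p) (hq : 0 ≤ q)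
    {v : ι → ℝ} {m n : ℕ} (hmn : m ≤ n) (h : ∃ x, ∀ i, f i x ≤ (p + q) ^ m * v i) :
    ∃ x, ∀ i, f i x ≤ (p + q) ^ n * v i := by
  induction n, hmn using Nat.le_induction with
  | base => exact h
  | succ n _ ih =>
    obtain ⟨x, hx⟩ := ih
    refine ⟨op x x, fun i => ((hf i).apply_op_le hp hq (hx i) (hx i)).trans_eq ?_⟩
    ring

lemma lineMap_mem_scaledEpigraph (hf : ∀ i, PQConvex op p q (f i)) (hp : 0 < p) (hq : 0 < q)
    {u v : ι → ℝ} (hu : u ∈ scaledEpigraph (p + q) f) (hv : v ∈ scaledEpigraph (p + q) f) :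
    lineMap u v (q / (p + q)) ∈ scaledEpigraph (p + q) f := by
  obtain ⟨m, hm⟩ := hu
  obtain ⟨n, hn⟩ := hv
  obtain ⟨x, hx⟩ := exists_le_pow_mul_of_le hf hp.le hq.le (le_max_left m n) hm
  obtain ⟨y, hy⟩ := exists_le_pow_mul_of_le hf hp.le hq.le (le_max_right m n) hn
  refine ⟨max m n + 1, op x y, fun i => ?_⟩
  refine ((hf i).apply_op_le hp.le hq.le (hx i) (hy i)).trans_eq ?_
  simp only [lineMap_apply_module, Pi.add_apply, Pi.smul_apply, smul_eq_mul]
  field_simp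
  ring

end PQConvex

lemma disjoint_pi_Iio_scaledEpigraph {ι X : Type*} {c : ℝ} (hc : 0 < c) {f : ι → X → ℝ}
    (hmax : ∀ x, ∃ i, 0 ≤ f i x) : Disjoint (univ.pi fun _ => Iio 0) (scaledEpigraph c f) := by
  refine disjoint_left.2 fun v hv ⟨n, x, hx⟩ => ?_
  obtain ⟨i, hi⟩ := hmax x
  exact (hi.trans (hx i)).not_gt (mul_neg_of_pos_of_neg (pow_pos hc n) (hv i (mem_univ i)))

theorem maximum_theorem_two_pqConvex_general {ι X : Type*} [Fintype ι] [Nonempty X]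
    (circ : X → X → X) {p q : ℝ} (hp : 0 < p) (hq : 0 < q) {f : ι → X → ℝ}
    (hf : ∀ i, PQConvex circ p q (f i)) (hmax : ∀ x, ∃ i, 0 ≤ f i x) :
    ∃ w ∈ stdSimplex ℝ ι, ∀ x, 0 ≤ ∑ i, w i * f i x := by
  have hpq : 0 < p + q := add_pos hp hq
  have hmem : ∀ x, (f · x) ∈ scaledEpigraph (p + q) f := fun x => ⟨0, x, by simp⟩
  have hconvex : Convex ℝ (closure (scaledEpigraph (p + q) f)) :=
    convex_closure_of_lineMap_mem (div_pos hq hpq) ((div_lt_one hpq).2 (by linarith))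
      fun u hu v hv => PQConvex.lineMap_mem_scaledEpigraph hf hp hq hu hv
  have hdisj : Disjoint (univ.pi fun _ => Iio 0) (closure (scaledEpigraph (p + q) f)) :=
    (disjoint_pi_Iio_scaledEpigraph hpq hmax).closure_right
      (isOpen_set_pi finite_univ fun _ _ => isOpen_Iio)
  obtain ⟨w, hw, hw_nonneg⟩ := exists_mem_stdSimplex_sum_nonneg_of_disjoint hconvex
    ((range_nonempty _).mono (range_subset_iff.2 fun x => subset_closure (hmem x))) hdisj
  exact ⟨w, hw, fun x => hw_nonneg _ (subset_closure (hmem x))⟩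

/-- Maximum Theorem for two `(∘, p, q)`-convex functions. -/
theorem maximum_theorem_two_pqConvex
    {X : Type*} [Nonempty X] (circ : X → X → X) {p q : ℝ} (hp : 0 < p) (hq : 0 < q)
    {f g : X → ℝ} (hf : PQConvex circ p q f) (hg : PQConvex circ p q g)
    (hmax : ∀ x : X, 0 ≤ max (f x) (g x)) :
    ∃ lam ∈ Set.Icc (0:ℝ) 1, ∀ x : X, 0 ≤ lam * f x + (1 - lam) * g x := by
  obtain ⟨w, hw, h⟩ := maximum_theorem_two_pqConvex_general circ hp hq (f := ![f, g])
    (Fin.forall_fin_two.2 ⟨hf, hg⟩) fun x => by simpa [Fin.exists_fin_two] using hmax x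
  have hw₁ : w 1 = 1 - w 0 := eq_sub_of_add_eq' (by simpa using hw.2)
  exact ⟨w 0, mem_Icc_of_mem_stdSimplex hw 0, fun x => by simpa [hw₁] using h x⟩
end
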